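/- (Sign structure of the curvature-weighted residual at y*.) For the softmax cross-entropy residual and Hessian, each coordinate satisfies (H_z g)_i = p_i (p_i − y_i − C) where C = Σ_k p_k² − p_y; moreover C ≤ p_{y*}, and consequently the curvature gaps satisfy Δ_{j,y*} = (H_z g)_j − (H_z g)_{y*} ≤ 0 for every class j, with Δ_{j,y*} < 0 for at least one j whenever p_{y*} ∈ (0,1). -/

import Mathlib

/-- The softmax map `ℝ^V → ℝ^V`. -/
noncomputable def softmax {V : ℕ} (z : Fin V → ℝ) : Fin V → ℝ :=
  fun i => Real.exp (z i) / ∑ j, Real.exp (z j)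

/-- The one-hot vector of a class index `y`. -/
noncomputable def oneHot {V : ℕ} (y : Fin V) : Fin V → ℝ := Pi.single y 1

/-- The softmax logit Hessian `H_z = diag(p) − p pᵀ`. -/
noncomputable def logitHess {V : ℕ} (p : Fin V → ℝ) : Matrix (Fin V) (Fin V) ℝ :=
  Matrix.diagonal p - Matrix.vecMulVec p p

theorem softmax_pos {V : ℕ} (z : Fin V → ℝ) (i : Fin V) : 0 < softmax z i :=
  div_pos (Real.exp_pos _) (Finset.sum_pos (fun _ _ => Real.exp_pos _) ⟨i, Finset.mem_univ i⟩)

theorem sum_softmax {V : ℕ} (z : Fin V → ℝ) (i : Fin V) : ∑ k, softmax z k = 1 := by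
  have h : 0 < ∑ j, Real.exp (z j) :=
    Finset.sum_pos (fun _ _ => Real.exp_pos _) ⟨i, Finset.mem_univ i⟩
  simp only [softmax, ← Finset.sum_div]
  exact div_self h.ne'

theorem logitHess_mulVec_residual {V : ℕ} (p : Fin V → ℝ) (y i : Fin V) :
    (logitHess p).mulVec (p - oneHot y) i
      = p i * (p i - oneHot y i - ((∑ k, p k ^ 2) - p y)) := by
  have h : p ⬝ᵥ (p - oneHot y) = (∑ k, p k ^ 2) - p y := by
    rw [dotProduct_sub, oneHot, dotProduct_single_one]
    simp only [dotProduct, sq]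
  rw [logitHess, Matrix.sub_mulVec, Pi.sub_apply, Matrix.mulVec_diagonal,
    Matrix.vecMulVec_mulVec, h]
  simp only [Pi.sub_apply, Pi.smul_apply, MulOpposite.smul_eq_mul_unop, MulOpposite.unop_op]
  ring

/-- If `m` bounds a probability vector off the index `y`, its sum of squares is at most
`p_y² + m (1 - p_y)`. -/
theorem sum_sq_le_of_le_off {V : ℕ} (p : Fin V → ℝ) (hp : ∀ i, 0 ≤ p i) (hsum : ∑ k, p k = 1)
    (y : Fin V) (m : ℝ) (hm : ∀ j, j ≠ y → p j ≤ m) :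
    ∑ k, p k ^ 2 ≤ p y ^ 2 + m * (1 - p y) := by
  rw [← Finset.add_sum_erase _ _ (Finset.mem_univ y)] at hsum ⊢
  rw [← hsum, add_sub_cancel_left, Finset.mul_sum]
  gcongr with j hj
  rw [sq]
  exact mul_le_mul_of_nonneg_right (hm j (Finset.ne_of_mem_erase hj)) (hp j)

/-- Sign structure of the curvature-weighted residual at `y*`.
With `p = softmax(z)`, `g = p − y` (one-hot `y`), `H_z = diag(p) − p pᵀ`, and
`y*` a class maximizing `p_j` over `j ≠ y`: each coordinate satisfies
`(H_z g)_i = p_i (p_i − y_i − C)` with `C = Σ_k p_k² − p_y`; moreover `C ≤ p_{y*}`;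
consequently `Δ_{j,y*} = (H_z g)_j − (H_z g)_{y*} ≤ 0` for every class `j`, with
`Δ_{j,y*} < 0` for at least one `j` whenever `p_{y*} ∈ (0,1)`. -/
theorem statement18 (V : ℕ) (hV : 2 ≤ V) (z : Fin V → ℝ) (y ystar : Fin V)
    (hne : ystar ≠ y)
    (hmax : ∀ j, j ≠ y → softmax z j ≤ softmax z ystar) :
    (∀ i, (logitHess (softmax z)).mulVec (softmax z - oneHot y) i
        = softmax z i * (softmax z i - oneHot y i - ((∑ k, softmax z k ^ 2) - softmax z y))) ∧
    ((∑ k, softmax z k ^ 2) - softmax z y ≤ softmax z ystar) ∧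
    (∀ j, (logitHess (softmax z)).mulVec (softmax z - oneHot y) j
        - (logitHess (softmax z)).mulVec (softmax z - oneHot y) ystar ≤ 0) ∧
    (0 < softmax z ystar → softmax z ystar < 1 →
      ∃ j, (logitHess (softmax z)).mulVec (softmax z - oneHot y) j
        - (logitHess (softmax z)).mulVec (softmax z - oneHot y) ystar < 0) := by
  have hpos := softmax_pos z
  have hsum := sum_softmax z y
  have hupper := sum_sq_le_of_le_off _ (fun i => (hpos i).le) hsum y _ hmax
  simp only [logitHess_mulVec_residual]
  generalize softmax z = p at *
  have hlower : p y ^ 2 ≤ ∑ k, p k ^ 2 :=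
    Finset.single_le_sum (f := fun k => p k ^ 2) (fun k _ => sq_nonneg _) (Finset.mem_univ y)
  have hy : p y < 1 := by
    have := Finset.add_le_sum (fun i _ => (hpos i).le) (Finset.mem_univ ystar)
      (Finset.mem_univ y) hne
    linarith [hpos ystar]
  generalize ∑ k, p k ^ 2 = S at *
  have hC : S - p y < p ystar := by
    nlinarith [mul_pos (hpos y) (sub_pos.2 hy), mul_pos (hpos y) (hpos ystar)]
  have hstar : oneHot y ystar = 0 := Pi.single_eq_of_ne hne 1
  have hgap_y : p y * (p y - oneHot y y - (S - p y))
      - p ystar * (p ystar - oneHot y ystar - (S - p y)) < 0 := by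
    rw [hstar, show oneHot y y = 1 from Pi.single_eq_same y 1]
    have hfactor : p y - 1 - (S - p y) ≤ 0 := by nlinarith [sq_nonneg (p y - 1)]
    nlinarith [mul_nonneg (hpos y).le (neg_nonneg.2 hfactor),
      mul_pos (hpos ystar) (sub_pos.2 hC)]
  refine ⟨fun _ => trivial, hC.le, fun j => ?_, fun _ _ => ⟨y, hgap_y⟩⟩
  rcases eq_or_ne j y with rfl | hj
  · exact hgap_y.le
  · rw [hstar, show oneHot y j = 0 from Pi.single_eq_of_ne hj 1]
    nlinarith [mul_nonneg (sub_nonneg.2 (hmax j hj))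
      (add_nonneg (hpos j).le (sub_nonneg.2 hC.le))]
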